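/- Let (E, 𝓕, μ) be a probability space, (𝒳_i)_{i≥0} measurable spaces, X_i : E → 𝒳_i measurable, 𝒴_n = ∏_{j≥n} 𝒳_j and X̄_n(x) = (X_n(x), X_{n+1}(x), ...). Let (δ_n) be nonnegative reals, r : E → [0,∞) with ∫ r dμ = 1 satisfying the decorrelation property with constant K ≥ 0 relative to (δ_n), and ν the probability measure dν = r dμ. Let g_j : 𝒴_j → ℝ^d be measurable, S_n = Σ_{j=0}^{n-1} g_j∘X̄_j, and (b_n) positive reals. Suppose there are p₁ ∈ [1,∞], p₂, p₃ ∈ [1,∞) with 1/p₁ + 1/p₂ + 1/p₃ = 1, with r ∈ L^{p₁}(μ), g_j∘X̄_j ∈ L^{p₂}(μ; ℝ^d) for all j, and positive numbers (M_j) such that 𝓜_n := Σ_{j=0}^{n-1} ( M_j δ_j + ‖g_j∘X̄_j‖_{L^{p₂}(μ)}^{1 + p₂/p₃} M_j^{−p₂/p₃} ) satisfies 𝓜_n / b_n → 0. Then | ∫ S_n dν − ∫ S_n dμ | / b_n → 0 as n → ∞, and consequently ( S_n − ∫ S_n dμ ) / b_n converges in distribution under ν if and only if ( S_n − ∫ S_n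 dν ) / b_n converges in distribution under ν, and in that case the limits coincide. -/

import Mathlib

open MeasureTheory Filter Topology Complex
open scoped BigOperators ENNReal RealInnerProductSpace

/-- `X̄ₙ(x) = (Xₙ(x), Xₙ₊₁(x), ...)`. -/
def Xbar {E : Type*} {𝒳 : ℕ → Type*} (X : ∀ i, E → 𝒳 i) (n : ℕ) (x : E) :
    ∀ j, 𝒳 (n + j) := fun j => X (n + j) x

/-- The decorrelation property with constant `K` relative to the rates `δ`: for every `n`
and every bounded measurable `f : 𝒴ₙ → ℂ`,
`|∫ s·(f∘X̄ₙ) dμ − ∫ s dμ · ∫ f∘X̄ₙ dμ| ≤ K · sup|f| · δₙ`. -/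
def Decorrelates {E : Type*} [MeasurableSpace E] (μ : Measure E) {𝒳 : ℕ → Type*}
    [∀ i, MeasurableSpace (𝒳 i)] (X : ∀ i, E → 𝒳 i) (s : E → ℝ) (K : ℝ) (δ : ℕ → ℝ) : Prop :=
  ∀ (n : ℕ) (f : (∀ j, 𝒳 (n + j)) → ℂ) (C : ℝ), Measurable f → (∀ y, ‖f y‖ ≤ C) →
    ‖(∫ x, (s x : ℂ) * f (Xbar X n x) ∂μ) -
        ((∫ x, s x ∂μ : ℝ) : ℂ) * ∫ x, f (Xbar X n x) ∂μ‖ ≤ K * C * δ n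

/-- Convergence in distribution (weak convergence of laws) of `Wₙ` under `μ` towards `P`. -/
def TendstoInDistribution {E G : Type*} [MeasurableSpace E] [TopologicalSpace G] [MeasurableSpace G]
    (μ : Measure E) (W : ℕ → E → G) (P : Measure G) : Prop :=
  ∀ h : BoundedContinuousFunction G ℝ,
    Tendsto (fun n => ∫ x, h (W n x) ∂μ) atTop (𝓝 (∫ y, h y ∂P))

/-!
The difference `∫ Sₙ dν − ∫ Sₙ dμ` is the sum over `j < n` of the integrals `∫ (r − 1) • Gⱼ dμ`,
where `Gⱼ = gⱼ ∘ X̄ⱼ`. Cut `Gⱼ` at height `Mⱼ`. Testing against a norming functional turns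
decorrelation into a bound `K Mⱼ δⱼ` for the bounded part. On the remaining part
`‖Gⱼ‖ ≤ ‖Gⱼ‖ ^ (1 + t) * Mⱼ ^ (-t)` with `t = p₂ / p₃`; this choice of `t` makes the right-hand side
an element of `L^q`, `1 / q = 1 / p₂ + 1 / p₃`, so that Hölder's inequality against
`r − 1 ∈ L^{p₁}` applies. The two centerings therefore differ by a deterministic `o(bₙ)`, and
Slutsky's theorem transfers the limit laws.
-/

section ConvergenceInDistribution

variable {E G : Type*} [MeasurableSpace E] [MeasurableSpace G] {ν : Measure E}

lemma TendstoInDistribution.unique [TopologicalSpace G] [HasOuterApproxClosed G] [BorelSpace G]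
    {W : ℕ → E → G} {P Q : Measure G} [IsFiniteMeasure P] [IsFiniteMeasure Q]
    (hP : _root_.TendstoInDistribution ν W P) (hQ : _root_.TendstoInDistribution ν W Q) : P = Q :=
  ext_of_forall_integral_eq_of_IsFiniteMeasure fun h => tendsto_nhds_unique (hP h) (hQ h)

lemma tendstoInDistribution_iff_measureTheory [TopologicalSpace G] [OpensMeasurableSpace G]
    [IsProbabilityMeasure ν] {W : ℕ → E → G} (hW : ∀ n, AEMeasurable (W n) ν)
    {P : Measure G} [IsProbabilityMeasure P] :
    _root_.TendstoInDistribution ν W P ↔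
      MeasureTheory.TendstoInDistribution W atTop id (fun _ => ν) P := by
  have hmap (h : BoundedContinuousFunction G ℝ) (n : ℕ) :
      ∫ y, h y ∂(ν.map (W n)) = ∫ x, h (W n x) ∂ν :=
    integral_map (hW n) h.continuous.measurable.aestronglyMeasurable
  constructor
  · refine fun hP => ⟨hW, aemeasurable_id, ?_⟩
    refine ProbabilityMeasure.tendsto_iff_forall_integral_tendsto.2 ?_
    simpa only [ProbabilityMeasure.coe_mk, Measure.map_id, hmap] using! hP
  · intro hP h
    have := ProbabilityMeasure.tendsto_iff_forall_integral_tendsto.1 hP.tendsto h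
    simpa only [ProbabilityMeasure.coe_mk, Measure.map_id, hmap] using this

variable [NormedAddCommGroup G] [SecondCountableTopology G] [BorelSpace G]
  [IsProbabilityMeasure ν]

lemma TendstoInDistribution.of_tendstoInMeasure_sub {W W' : ℕ → E → G}
    (hW : ∀ n, AEMeasurable (W n) ν) (hW' : ∀ n, AEMeasurable (W' n) ν)
    (hsub : TendstoInMeasure ν (W' - W) atTop 0) {P : Measure G} [IsProbabilityMeasure P]
    (hP : _root_.TendstoInDistribution ν W P) : _root_.TendstoInDistribution ν W' P :=
  (tendstoInDistribution_iff_measureTheory hW').2 <|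
    tendstoInDistribution_of_tendstoInMeasure_sub W' id
      ((tendstoInDistribution_iff_measureTheory hW).1 hP) hsub hW'

lemma TendstoInDistribution.smul_sub_of_tendsto [NormedSpace ℝ G] {S : ℕ → E → G}
    (hS : ∀ n, AEMeasurable (S n) ν) {a : ℕ → ℝ} {u v : ℕ → G}
    (huv : Tendsto (fun n => a n • (u n - v n)) atTop (𝓝 0)) {P : Measure G}
    [IsProbabilityMeasure P]
    (hP : _root_.TendstoInDistribution ν (fun n x => a n • (S n x - u n)) P) :
    _root_.TendstoInDistribution ν (fun n x => a n • (S n x - v n)) P := by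
  have hmeas (w : ℕ → G) (n : ℕ) : AEMeasurable (fun x => a n • (S n x - w n)) ν :=
    ((hS n).sub_const (w n)).const_smul (a n)
  refine of_tendstoInMeasure_sub (hmeas u) (hmeas v) ?_ hP
  refine tendstoInMeasure_of_tendsto_ae
    (fun n => ((hmeas v n).sub (hmeas u n)).aestronglyMeasurable) (ae_of_all _ fun x => ?_)
  simpa only [Pi.sub_apply, Pi.zero_apply, ← smul_sub, sub_sub_sub_cancel_left] using huv

lemma tendstoInDistribution_smul_sub_congr [NormedSpace ℝ G] {S : ℕ → E → G}
    (hS : ∀ n, AEMeasurable (S n) ν) {a : ℕ → ℝ} {u v : ℕ → G}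
    (huv : Tendsto (fun n => a n • (u n - v n)) atTop (𝓝 0)) {P : Measure G}
    [IsProbabilityMeasure P] :
    _root_.TendstoInDistribution ν (fun n x => a n • (S n x - u n)) P ↔
      _root_.TendstoInDistribution ν (fun n x => a n • (S n x - v n)) P := by
  refine ⟨.smul_sub_of_tendsto hS huv, .smul_sub_of_tendsto hS ?_⟩
  simpa only [← smul_neg, neg_sub, neg_zero] using huv.neg

end ConvergenceInDistribution

section Hoelder

lemma le_rpow_one_add_mul_rpow_neg {a M t : ℝ} (hM : 0 < M) (hMa : M ≤ a) (ht : 0 ≤ t) :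
    a ≤ a ^ (1 + t) * M ^ (-t) := by
  have ha : 0 < a := hM.trans_le hMa
  calc a = a * (M ^ t * M ^ (-t)) := by
        rw [← Real.rpow_add hM, add_neg_cancel, Real.rpow_zero, mul_one]
    _ ≤ a * (a ^ t * M ^ (-t)) := by gcongr
    _ = a ^ (1 + t) * M ^ (-t) := by rw [Real.rpow_add ha, Real.rpow_one, mul_assoc]

lemma norm_indicator_compl_lt_norm_le {E F : Type*} [NormedAddCommGroup F] {M : ℝ}
    (hM : 0 ≤ M) (f : E → F) (x : E) :
    ‖{x | M < ‖f x‖}ᶜ.indicator f x‖ ≤ M := by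
  by_cases hx : x ∈ {x | M < ‖f x‖}ᶜ
  · rw [Set.indicator_of_mem hx]
    exact not_lt.1 hx
  · rwa [Set.indicator_of_notMem hx, norm_zero]

variable {E F : Type*} [MeasurableSpace E] {μ : Measure E} [NormedAddCommGroup F]
  {p₁ p₂ p₃ q : ℝ≥0∞} {M t : ℝ}

lemma eLpNorm_indicator_lt_norm_le (f : E → F) (hM : 0 < M) (ht : 0 ≤ t) :
    eLpNorm ({x | M < ‖f x‖}.indicator f) q μ ≤
      eLpNorm f (q * ENNReal.ofReal (1 + t)) μ ^ (1 + t) * ENNReal.ofReal (M ^ (-t)) := by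
  rw [← eLpNorm_norm_rpow f (by positivity), mul_comm]
  refine eLpNorm_le_mul_eLpNorm_of_ae_le_mul (ae_of_all _ fun x => ?_) q
  rw [Real.norm_of_nonneg (by positivity), mul_comm]
  by_cases hx : M < ‖f x‖
  · rw [Set.indicator_of_mem (by exact hx)]
    exact le_rpow_one_add_mul_rpow_neg hM hx.le ht
  · rw [Set.indicator_of_notMem (by exact hx), norm_zero]
    positivity

lemma holderTriple_mul_ofReal_one_add_toReal_div [h : ENNReal.HolderTriple p₂ p₃ q] (hq : q ≠ 0)
    (hp₂ : p₂ ≠ ∞) : q * ENNReal.ofReal (1 + (p₂ / p₃).toReal) = p₂ := by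
  have hqp₂ : q ≤ p₂ := h.le
  have hqp₃ : q ≤ p₃ := h.symm.le
  have hp₂0 : p₂ ≠ 0 := (hq.bot_lt.trans_le hqp₂).ne'
  have hp₃0 : p₃ ≠ 0 := (hq.bot_lt.trans_le hqp₃).ne'
  have hratio : 1 + p₂ / p₃ = p₂ * q⁻¹ := by
    rw [← h.inv_add_inv_eq_inv, mul_add, ENNReal.mul_inv_cancel hp₂0 hp₂, div_eq_mul_inv]
  rw [ENNReal.ofReal_add zero_le_one ENNReal.toReal_nonneg, ENNReal.ofReal_one,
    ENNReal.ofReal_toReal (ENNReal.div_ne_top hp₂ hp₃0), hratio, mul_left_comm,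
    ENNReal.mul_inv_cancel hq (ne_top_of_le_ne_top hp₂ hqp₂), mul_one]

lemma eLpNorm_indicator_lt_norm_le_of_holderTriple [ENNReal.HolderTriple p₂ p₃ q] (hq : q ≠ 0)
    (hp₂ : p₂ ≠ ∞) (f : E → F) (hM : 0 < M) :
    eLpNorm ({x | M < ‖f x‖}.indicator f) q μ ≤
      eLpNorm f p₂ μ ^ (1 + (p₂ / p₃).toReal) * ENNReal.ofReal (M ^ (-(p₂ / p₃).toReal)) := by
  simpa only [holderTriple_mul_ofReal_one_add_toReal_div hq hp₂] using
    eLpNorm_indicator_lt_norm_le (q := q) (μ := μ) f hM (ENNReal.toReal_nonneg (a := p₂ / p₃))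

variable [NormedSpace ℝ F] {ρ : E → ℝ} {f : E → F}

lemma enorm_integral_smul_le_eLpNorm_mul_eLpNorm [ENNReal.HolderTriple p₁ q 1]
    (hρ : AEStronglyMeasurable ρ μ) (hf : AEStronglyMeasurable f μ) :
    ‖∫ x, ρ x • f x ∂μ‖ₑ ≤ eLpNorm ρ p₁ μ * eLpNorm f q μ :=
  calc ‖∫ x, ρ x • f x ∂μ‖ₑ ≤ ∫⁻ x, ‖(ρ • f) x‖ₑ ∂μ := enorm_integral_le_lintegral_enorm _
    _ = eLpNorm (ρ • f) 1 μ := eLpNorm_one_eq_lintegral_enorm.symm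
    _ ≤ eLpNorm ρ p₁ μ * eLpNorm f q μ := eLpNorm_smul_le_mul_eLpNorm hf hρ

lemma exists_holderTriple_of_inv_add_inv_add_inv_eq_one (hsum : p₁⁻¹ + p₂⁻¹ + p₃⁻¹ = 1) :
    ∃ q, ENNReal.HolderTriple p₂ p₃ q ∧ ENNReal.HolderTriple p₁ q 1 :=
  ⟨(p₂⁻¹ + p₃⁻¹)⁻¹, ⟨(inv_inv _).symm⟩, ⟨by rwa [inv_inv, inv_one, ← add_assoc]⟩⟩

lemma integrable_smul_of_inv_add_inv_add_inv_eq_one [IsFiniteMeasure μ]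
    (hsum : p₁⁻¹ + p₂⁻¹ + p₃⁻¹ = 1) (hρ : MemLp ρ p₁ μ) (hf : MemLp f p₂ μ) :
    Integrable (fun x => ρ x • f x) μ := by
  obtain ⟨q, h₂₃, _⟩ := exists_holderTriple_of_inv_add_inv_add_inv_eq_one hsum
  exact memLp_one_iff_integrable.1 ((hf.mono_exponent h₂₃.le).smul hρ)

lemma norm_integral_smul_indicator_lt_norm_le (hsum : p₁⁻¹ + p₂⁻¹ + p₃⁻¹ = 1) (hp₂ : p₂ ≠ ∞)
    (hρ : MemLp ρ p₁ μ) (hf : MemLp f p₂ μ) (hM : 0 < M) :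
    ‖∫ x, ρ x • {x | M < ‖f x‖}.indicator f x ∂μ‖ ≤ (eLpNorm ρ p₁ μ).toReal *
      ((eLpNorm f p₂ μ).toReal ^ (1 + (p₂ / p₃).toReal) * M ^ (-(p₂ / p₃).toReal)) := by
  obtain ⟨q, _, h₁⟩ := exists_holderTriple_of_inv_add_inv_add_inv_eq_one hsum
  have hq : q ≠ 0 := (zero_lt_one.trans_le h₁.symm.le).ne'
  have hf_top : eLpNorm f p₂ μ ^ (1 + (p₂ / p₃).toReal) ≠ ∞ :=
    ENNReal.rpow_ne_top_of_nonneg (by positivity) hf.2.ne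
  have hind : AEStronglyMeasurable ({x | M < ‖f x‖}.indicator f) μ :=
    hf.1.indicator₀ (nullMeasurableSet_lt aemeasurable_const hf.1.norm.aemeasurable)
  have hle : ‖∫ x, ρ x • {x | M < ‖f x‖}.indicator f x ∂μ‖ₑ ≤ eLpNorm ρ p₁ μ *
      (eLpNorm f p₂ μ ^ (1 + (p₂ / p₃).toReal) * ENNReal.ofReal (M ^ (-(p₂ / p₃).toReal))) :=
    (enorm_integral_smul_le_eLpNorm_mul_eLpNorm (q := q) hρ.1 hind).trans <| by
      gcongr
      exact eLpNorm_indicator_lt_norm_le_of_holderTriple hq hp₂ f hM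
  have := ENNReal.toReal_mono
    (ENNReal.mul_ne_top hρ.2.ne (ENNReal.mul_ne_top hf_top ENNReal.ofReal_ne_top)) hle
  simpa only [toReal_enorm, ENNReal.toReal_mul, ← ENNReal.toReal_rpow,
    ENNReal.toReal_ofReal (Real.rpow_nonneg hM.le _)] using this

end Hoelder

section Density

variable {E F : Type*} [MeasurableSpace E] {μ : Measure E} [NormedAddCommGroup F]
  [NormedSpace ℝ F] {r : E → ℝ} {f : E → F}

lemma isProbabilityMeasure_withDensity_ofReal (hr0 : 0 ≤ᵐ[μ] r)
    (hr1 : ∫ x, r x ∂μ = 1) :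
    IsProbabilityMeasure (μ.withDensity fun x => ENNReal.ofReal (r x)) :=
  have hr : Integrable r μ := .of_integral_ne_zero (hr1 ▸ one_ne_zero)
  ⟨by rw [withDensity_apply _ .univ, Measure.restrict_univ,
    ← ofReal_integral_eq_lintegral_ofReal hr hr0, hr1, ENNReal.ofReal_one]⟩

lemma integral_withDensity_ofReal (hr : AEMeasurable r μ) (hr0 : 0 ≤ᵐ[μ] r) (f : E → F) :
    ∫ x, f x ∂(μ.withDensity fun x => ENNReal.ofReal (r x)) = ∫ x, r x • f x ∂μ := by
  rw [integral_withDensity_eq_integral_toReal_smul₀ hr.ennreal_ofReal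
    (ae_of_all _ fun _ => ENNReal.ofReal_lt_top)]
  refine integral_congr_ae (hr0.mono fun x hx => ?_)
  simp only [ENNReal.toReal_ofReal hx]

lemma integral_sub_const_smul (hrf : Integrable (fun x => r x • f x) μ) (hf : Integrable f μ)
    (c : ℝ) : ∫ x, (r x - c) • f x ∂μ = ∫ x, r x • f x ∂μ - c • ∫ x, f x ∂μ := by
  simp_rw [sub_smul]
  rw [integral_sub hrf (hf.fun_smul c), integral_smul]

end Density

section Decorrelation

/-- The quantity `𝓜ₙ` of the paper for the random vectors `Gⱼ` and the truncation levels `Mⱼ`. It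
controls the error made by cutting each `Gⱼ` at height `Mⱼ` and decorrelating the bounded part. -/
noncomputable def truncationBound {E F : Type*} [MeasurableSpace E] [NormedAddCommGroup F]
    (μ : Measure E) (p₂ p₃ : ℝ≥0∞) (δ : ℕ → ℝ) (G : ℕ → E → F) (M : ℕ → ℝ) (n : ℕ) : ℝ :=
  ∑ j ∈ Finset.range n, (M j * δ j +
    (eLpNorm (G j) p₂ μ).toReal ^ (1 + (p₂ / p₃).toReal) * M j ^ (-(p₂ / p₃).toReal))

variable {E F : Type*} [MeasurableSpace E] {μ : Measure E} {𝒳 : ℕ → Type*}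
  [∀ i, MeasurableSpace (𝒳 i)] {X : ∀ i, E → 𝒳 i}

lemma measurable_Xbar (hX : ∀ i, Measurable (X i)) (n : ℕ) : Measurable (Xbar X n) :=
  measurable_pi_lambda _ fun j => hX (n + j)

variable [NormedAddCommGroup F] [NormedSpace ℝ F] [CompleteSpace F] [SecondCountableTopology F]
  [MeasurableSpace F] [BorelSpace F] [IsFiniteMeasure μ] {s r : E → ℝ} {K : ℝ} {δ : ℕ → ℝ}

lemma Decorrelates.norm_integral_centered_smul_le_of_bounded (hdec : Decorrelates μ X s K δ)
    (hX : ∀ i, Measurable (X i)) (hs : Integrable s μ) {j : ℕ} {A : (∀ i, 𝒳 (j + i)) → F}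
    (hA : Measurable A) {C : ℝ} (hAC : ∀ y, ‖A y‖ ≤ C) :
    ‖∫ x, (s x - ∫ y, s y ∂μ) • A (Xbar X j x) ∂μ‖ ≤ K * C * δ j := by
  have hAX : AEStronglyMeasurable (fun x => A (Xbar X j x)) μ :=
    (hA.comp (measurable_Xbar hX j)).aestronglyMeasurable
  have hA_int : Integrable (fun x => A (Xbar X j x)) μ :=
    .of_bound hAX C (ae_of_all _ fun _ => hAC _)
  have hsA_int : Integrable (fun x => s x • A (Xbar X j x)) μ :=
    hs.smul_bdd C hAX (ae_of_all _ fun _ => hAC _)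
  rw [integral_sub_const_smul hsA_int hA_int]
  set w := ∫ x, s x • A (Xbar X j x) ∂μ - (∫ x, s x ∂μ) • ∫ x, A (Xbar X j x) ∂μ with hw
  obtain ⟨φ, hφ, hφw⟩ := exists_dual_vector'' ℝ w
  have hφw_eq : (∫ x, (s x : ℂ) * (φ (A (Xbar X j x)) : ℂ) ∂μ) -
      ((∫ x, s x ∂μ : ℝ) : ℂ) * ∫ x, (φ (A (Xbar X j x)) : ℂ) ∂μ = (φ w : ℂ) := by
    simp_rw [← ofReal_mul, integral_complex_ofReal, ← smul_eq_mul (a := s _), ← map_smul]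
    rw [φ.integral_comp_comm hsA_int, φ.integral_comp_comm hA_int, ← ofReal_mul, ← ofReal_sub,
      hw, map_sub, map_smul, smul_eq_mul]
  have hdecφ := hdec j (fun y => (φ (A y) : ℂ)) C
    (measurable_ofReal.comp (φ.measurable.comp hA)) fun y => by
      rw [norm_real]
      exact (φ.le_of_opNorm_le hφ _).trans (by rw [one_mul]; exact hAC y)
  simpa only [hφw_eq, hφw, norm_real, RCLike.ofReal_real_eq_id, id_eq, norm_norm] using hdecφ

variable {p₁ p₂ p₃ : ℝ≥0∞}

lemma Decorrelates.norm_integral_centered_smul_le (hdec : Decorrelates μ X s K δ)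
    (hX : ∀ i, Measurable (X i)) (hsum : p₁⁻¹ + p₂⁻¹ + p₃⁻¹ = 1) (hp₂ : p₂ ≠ ∞)
    (hs : MemLp s p₁ μ) {j : ℕ} {g : (∀ i, 𝒳 (j + i)) → F} (hg : Measurable g)
    (hgL : MemLp (fun x => g (Xbar X j x)) p₂ μ) {M : ℝ} (hM : 0 < M) :
    ‖∫ x, (s x - ∫ y, s y ∂μ) • g (Xbar X j x) ∂μ‖ ≤
      K * M * δ j + (eLpNorm (fun x => s x - ∫ y, s y ∂μ) p₁ μ).toReal *
        ((eLpNorm (fun x => g (Xbar X j x)) p₂ μ).toReal ^ (1 + (p₂ / p₃).toReal) *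
          M ^ (-(p₂ / p₃).toReal)) := by
  obtain ⟨_, _, h₁⟩ := exists_holderTriple_of_inv_add_inv_add_inv_eq_one hsum
  set ρ : E → ℝ := fun x => s x - ∫ y, s y ∂μ
  set G : E → F := fun x => g (Xbar X j x)
  let A := {y | M < ‖g y‖}ᶜ.indicator g
  let T := {x | M < ‖G x‖}.indicator G
  have hs_int : Integrable s μ := hs.integrable h₁.le
  have hρ : MemLp ρ p₁ μ := hs.sub (memLp_const _)
  have hA : Measurable A := hg.indicator (measurableSet_lt measurable_const hg.norm).compl
  have hAM (y) : ‖A y‖ ≤ M := norm_indicator_compl_lt_norm_le hM.le g y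
  have hρA_int : Integrable (fun x => ρ x • A (Xbar X j x)) μ :=
    (hs_int.sub (integrable_const _)).smul_bdd M
      (hA.comp (measurable_Xbar hX j)).aestronglyMeasurable (ae_of_all _ fun _ => hAM _)
  have hρT_int : Integrable (fun x => ρ x • T x) μ :=
    integrable_smul_of_inv_add_inv_add_inv_eq_one hsum hρ <| hgL.indicator <|
      measurableSet_lt measurable_const (hg.comp (measurable_Xbar hX j)).norm
  have hsplit (x) : G x = A (Xbar X j x) + T x :=
    (congrFun (Set.indicator_compl_add_self {x | M < ‖G x‖} G) x).symm
  calc ‖∫ x, ρ x • G x ∂μ‖ = ‖∫ x, ρ x • A (Xbar X j x) ∂μ + ∫ x, ρ x • T x ∂μ‖ := by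
        simp_rw [hsplit, smul_add, integral_add hρA_int hρT_int]
    _ ≤ _ := norm_add_le_of_le (hdec.norm_integral_centered_smul_le_of_bounded hX hs_int hA hAM)
        (norm_integral_smul_indicator_lt_norm_le hsum hp₂ hρ hgL hM)

lemma Decorrelates.norm_integral_withDensity_sub_integral_le (hdec : Decorrelates μ X r K δ)
    (hX : ∀ i, Measurable (X i)) (hδ0 : ∀ n, 0 ≤ δ n) (hsum : p₁⁻¹ + p₂⁻¹ + p₃⁻¹ = 1)
    (hp₂ : p₂ ≠ ∞) (hr : MemLp r p₁ μ) (hr0 : 0 ≤ᵐ[μ] r) (hr1 : ∫ x, r x ∂μ = 1)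
    {g : ∀ j, (∀ i, 𝒳 (j + i)) → F} (hg : ∀ j, Measurable (g j))
    (hgL : ∀ j, MemLp (fun x => g j (Xbar X j x)) p₂ μ) {M : ℕ → ℝ} (hM : ∀ j, 0 < M j) (n : ℕ) :
    ‖∫ x, ∑ j ∈ Finset.range n, g j (Xbar X j x) ∂(μ.withDensity fun x => ENNReal.ofReal (r x)) -
        ∫ x, ∑ j ∈ Finset.range n, g j (Xbar X j x) ∂μ‖ ≤
      (|K| + (eLpNorm (fun x => r x - 1) p₁ μ).toReal) *
        truncationBound μ p₂ p₃ δ (fun j x => g j (Xbar X j x)) M n := by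
  obtain ⟨_, h₂₃, h₁⟩ := exists_holderTriple_of_inv_add_inv_add_inv_eq_one hsum
  have hg_int (j) : Integrable (fun x => g j (Xbar X j x)) μ :=
    (hgL j).integrable (h₁.symm.le.trans h₂₃.le)
  have hrg_int (j) : Integrable (fun x => r x • g j (Xbar X j x)) μ :=
    integrable_smul_of_inv_add_inv_add_inv_eq_one hsum hr (hgL j)
  have hdiff : ∫ x, ∑ j ∈ Finset.range n, g j (Xbar X j x)
        ∂(μ.withDensity fun x => ENNReal.ofReal (r x)) -
        ∫ x, ∑ j ∈ Finset.range n, g j (Xbar X j x) ∂μ =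
      ∑ j ∈ Finset.range n, ∫ x, (r x - 1) • g j (Xbar X j x) ∂μ := by
    rw [integral_withDensity_ofReal hr.1.aemeasurable hr0]
    simp_rw [Finset.smul_sum, integral_sub_const_smul (hrg_int _) (hg_int _), one_smul]
    rw [integral_finsetSum _ fun j _ => hrg_int j, integral_finsetSum _ fun j _ => hg_int j,
      Finset.sum_sub_distrib]
  rw [hdiff, truncationBound, Finset.mul_sum]
  refine norm_sum_le_of_le _ fun j _ => ?_
  have hterm := hdec.norm_integral_centered_smul_le hX hsum hp₂ hr (hg j) (hgL j) (hM j)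
  simp_rw [hr1] at hterm
  have hMδ : 0 ≤ M j * δ j := mul_nonneg (hM j).le (hδ0 j)
  refine hterm.trans ?_
  rw [mul_add, mul_assoc K]
  have := (hM j).le
  gcongr
  · exact (le_abs_self K).trans (le_add_of_nonneg_right ENNReal.toReal_nonneg)
  · exact le_add_of_nonneg_left (abs_nonneg K)

end Decorrelation

theorem centering_problem_general {E F : Type*} [MeasurableSpace E] {μ : Measure E}
    [IsFiniteMeasure μ] [NormedAddCommGroup F] [NormedSpace ℝ F] [CompleteSpace F]
    [SecondCountableTopology F] [MeasurableSpace F] [BorelSpace F]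
    {𝒳 : ℕ → Type*} [∀ i, MeasurableSpace (𝒳 i)]
    {X : ∀ i, E → 𝒳 i} (hX : ∀ i, Measurable (X i)) {δ : ℕ → ℝ} (hδ0 : ∀ n, 0 ≤ δ n)
    {r : E → ℝ} (hr0 : 0 ≤ᵐ[μ] r) (hr1 : ∫ x, r x ∂μ = 1)
    {K : ℝ} (hdec : Decorrelates μ X r K δ)
    {ν : Measure E} (hν : ν = μ.withDensity (fun x => ENNReal.ofReal (r x)))
    {g : ∀ j, (∀ i, 𝒳 (j + i)) → F} (hg : ∀ j, Measurable (g j))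
    {S : ℕ → E → F} (hS : ∀ n x, S n x = ∑ j ∈ Finset.range n, g j (Xbar X j x))
    {b : ℕ → ℝ} (hb0 : ∀ n, 0 < b n) {p₁ p₂ p₃ : ℝ≥0∞} (hp₂ : p₂ ≠ ∞)
    (hsum : p₁⁻¹ + p₂⁻¹ + p₃⁻¹ = 1) (hrL : MemLp r p₁ μ)
    (hgL : ∀ j, MemLp (fun x => g j (Xbar X j x)) p₂ μ)
    {M : ℕ → ℝ} (hM : ∀ j, 0 < M j)
    (h𝓜 : Tendsto (fun n => truncationBound μ p₂ p₃ δ (fun j x => g j (Xbar X j x)) M n / b n)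
      atTop (𝓝 0)) :
    Tendsto (fun n => ‖(∫ x, S n x ∂ν) - ∫ x, S n x ∂μ‖ / b n) atTop (𝓝 0) ∧
    ∀ (P : Measure F) [IsProbabilityMeasure P],
      _root_.TendstoInDistribution ν (fun n x => (b n)⁻¹ • (S n x - ∫ y, S n y ∂μ)) P ↔
        _root_.TendstoInDistribution ν (fun n x => (b n)⁻¹ • (S n x - ∫ y, S n y ∂ν)) P := by
  obtain rfl : S = fun n x => ∑ j ∈ Finset.range n, g j (Xbar X j x) := funext₂ hS
  have : IsProbabilityMeasure ν := hν ▸ isProbabilityMeasure_withDensity_ofReal hr0 hr1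
  have hlim : Tendsto (fun n => ‖(∫ x, ∑ j ∈ Finset.range n, g j (Xbar X j x) ∂ν) -
      ∫ x, ∑ j ∈ Finset.range n, g j (Xbar X j x) ∂μ‖ / b n) atTop (𝓝 0) := by
    refine squeeze_zero (fun n => div_nonneg (norm_nonneg _) (hb0 n).le) (fun n => ?_)
      (by simpa only [mul_zero] using
        h𝓜.const_mul (|K| + (eLpNorm (fun x => r x - 1) p₁ μ).toReal))
    rw [← mul_div_assoc, hν]
    exact div_le_div_of_nonneg_right (hdec.norm_integral_withDensity_sub_integral_le
      hX hδ0 hsum hp₂ hrL hr0 hr1 hg hgL hM n) (hb0 n).le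
  refine ⟨hlim, fun P _ => tendstoInDistribution_smul_sub_congr (fun n => ?_) ?_⟩
  · exact (Finset.measurable_fun_sum _ fun j _ => (hg j).comp (measurable_Xbar hX j)).aemeasurable
  · refine squeeze_zero_norm (fun n => ?_) hlim
    rw [norm_smul, norm_inv, Real.norm_of_nonneg (hb0 n).le, norm_sub_rev, div_eq_inv_mul]

/-- **Proposition 2.4 (the centering problem)**: if `r ∈ L^{p₁}(μ)` decorrelates,
`gⱼ∘X̄ⱼ ∈ L^{p₂}(μ)`, `1/p₁ + 1/p₂ + 1/p₃ = 1`, and for some positive truncation levels `Mⱼ`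
the quantity `𝓜ₙ = ∑_{j<n} (Mⱼδⱼ + ‖gⱼ∘X̄ⱼ‖_{p₂}^{1+p₂/p₃} Mⱼ^{−p₂/p₃})` is `o(bₙ)`, then
`|∫ Sₙ dν − ∫ Sₙ dμ| = o(bₙ)`, and consequently `(Sₙ − ∫Sₙ dμ)/bₙ` converges in distribution
under `ν` iff `(Sₙ − ∫Sₙ dν)/bₙ` does, with the same limit. -/
theorem centering_problem
    {E : Type*} [MeasurableSpace E] (μ : Measure E) [IsProbabilityMeasure μ]
    {𝒳 : ℕ → Type*} [∀ i, MeasurableSpace (𝒳 i)]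
    (X : ∀ i, E → 𝒳 i) (hX : ∀ i, Measurable (X i))
    (δ : ℕ → ℝ) (hδ0 : ∀ n, 0 ≤ δ n)
    (r : E → ℝ) (hrmeas : Measurable r) (hr0 : ∀ x, 0 ≤ r x) (hr1 : ∫ x, r x ∂μ = 1)
    (K : ℝ) (hK : 0 ≤ K) (hdec : Decorrelates μ X r K δ)
    (ν : Measure E) (hν : ν = μ.withDensity (fun x => ENNReal.ofReal (r x)))
    {d : ℕ} (g : ∀ j, (∀ i, 𝒳 (j + i)) → EuclideanSpace ℝ (Fin d))
    (hg : ∀ j, Measurable (g j))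
    (S : ℕ → E → EuclideanSpace ℝ (Fin d))
    (hS : ∀ n x, S n x = ∑ j ∈ Finset.range n, g j (Xbar X j x))
    (b : ℕ → ℝ) (hb0 : ∀ n, 0 < b n)
    (p₁ p₂ p₃ : ℝ≥0∞) (hp₁ : 1 ≤ p₁) (hp₂ : 1 ≤ p₂) (hp₂' : p₂ ≠ ∞)
    (hp₃ : 1 ≤ p₃) (hp₃' : p₃ ≠ ∞)
    (hsum : 1 / p₁ + 1 / p₂ + 1 / p₃ = 1)
    (hrL : MemLp r p₁ μ)
    (hgL : ∀ j, MemLp (fun x => g j (Xbar X j x)) p₂ μ)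
    (M : ℕ → ℝ) (hM : ∀ j, 0 < M j)
    (h𝓜 : Tendsto (fun n =>
      (∑ j ∈ Finset.range n, (M j * δ j +
        (eLpNorm (fun x => g j (Xbar X j x)) p₂ μ).toReal ^ (1 + p₂.toReal / p₃.toReal) *
          M j ^ (-(p₂.toReal / p₃.toReal)))) / b n) atTop (𝓝 0)) :
    Tendsto (fun n => ‖(∫ x, S n x ∂ν) - ∫ x, S n x ∂μ‖ / b n) atTop (𝓝 0) ∧
    ((∃ P : Measure (EuclideanSpace ℝ (Fin d)), IsProbabilityMeasure P ∧
        TendstoInDistribution ν (fun n x => (b n)⁻¹ • (S n x - ∫ y, S n y ∂μ)) P) ↔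
      (∃ P : Measure (EuclideanSpace ℝ (Fin d)), IsProbabilityMeasure P ∧
        TendstoInDistribution ν (fun n x => (b n)⁻¹ • (S n x - ∫ y, S n y ∂ν)) P)) ∧
    (∀ P Q : Measure (EuclideanSpace ℝ (Fin d)),
      IsProbabilityMeasure P → IsProbabilityMeasure Q →
      TendstoInDistribution ν (fun n x => (b n)⁻¹ • (S n x - ∫ y, S n y ∂μ)) P →
      TendstoInDistribution ν (fun n x => (b n)⁻¹ • (S n x - ∫ y, S n y ∂ν)) Q → P = Q) := by
  obtain ⟨hlim, hiff⟩ := centering_problem_general hX hδ0 (ae_of_all _ hr0) hr1 hdec hν hg hS hb0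
    hp₂' (by simpa only [one_div] using hsum) hrL hgL hM
    (by simpa only [truncationBound, ENNReal.toReal_div] using h𝓜)
  exact ⟨hlim, exists_congr fun P => and_congr_right fun _ => hiff P,
    fun P Q _ _ hP hQ => ((hiff P).1 hP).unique hQ⟩
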